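/- Let f : S^{n−1} → (0,∞) and φ : (0,∞) → (0,∞) be smooth, and suppose ℜ : (0,∞) → (0,∞) is given by ℜ(s) = ∫ₛ^∞ dt/(t φ(t)) (finite for all s > 0). Then along any smooth, origin-symmetric, strictly convex solution of the flow, the functional P(t) = ∫_{S^{n−1}} ℜ(1/h(x,t)) f(x) dx satisfies, for every t, the identity P′(t) · ∫_{S^{n−1}} f(x)/φ(1/h(x,t)) dx = (∫_{S^{n−1}} f(x)/φ(1/h(x,t)) dx)² − (∫_{S^{n−1}} f(x)² (|∇h|² + h²)^{n/2} / (h φ(1/h)² det(∇²h + hI)) dx) · (∫_{S^{n−1}} h det(∇²h + hI) (|∇h|² + h²)^{−n/2} dx), and by the Hölder (Cauchy–Schwarz) inequality this quantity is nonpositive. -/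

import Mathlib

/-!
For a solution `H` of the flow, differentiating `P(t) = ∫ ℜ(1/h) f` under the integral sign and
inserting the flow equation gives
`P' = ∫ f/φ - η ∫ f² (|∇h|² + h²)^{n/2} / (h φ² det(∇²h + hI))`, with `η = |S^{n-1}| / ∫ f/φ`.
The identity therefore amounts to `|S^{n-1}| = ∫ h det(∇²h + hI) (|∇h|² + h²)^{-n/2}`
(`IsSupportFn.sphInt_eq_sphArea`), the change of variables along the radial Gauss map.

To avoid calculus on the sphere, this change of variables is carried out in `ℝⁿ`. Let `F` be the
1-homogeneous extension of `h`. The map `∇(F²/2) = F ∇F` (`gradMap`) is 1-homogeneous, injective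
because `D²(F²/2)` is positive definite (`gradMap_injOn`), and onto `ℝⁿ ∖ 0` (`gradMap_image`).
On the sphere its Jacobian is `F^{n+1} det(∇²h + hI)` (`det_gradMapDeriv`) and its norm is
`F (|∇h|² + h²)^{1/2}`. Computing the volume of the unit ball through this diffeomorphism in polar
coordinates gives `1/n` times the integral above, while that volume is `|S^{n-1}| / n`.

The sign of the right-hand side is the Cauchy–Schwarz inequality (`sq_sphInt_le`), since `(f/φ)²` is
the product of the other two integrands.
-/

noncomputable section

open Metric MeasureTheory Set Filter Topology
open scoped RealInnerProductSpace NNReal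

/-- Abbreviation for `n`-dimensional Euclidean space. -/
abbrev Euc (n : ℕ) : Type := EuclideanSpace ℝ (Fin n)

/-- The unit sphere `S^{n-1}` in `ℝⁿ`, as a set. -/
abbrev USphere (n : ℕ) : Set (Euc n) := Metric.sphere (0 : Euc n) 1

/-- The surface (spherical Lebesgue) measure on the unit sphere. -/
def sphMeasure (n : ℕ) : Measure (USphere n) :=
  (volume : Measure (Euc n)).toSphere

/-- Total surface measure `|S^{n-1}|` of the unit sphere. -/
def sphArea (n : ℕ) : ℝ := (sphMeasure n Set.univ).toReal

/-- Integral over the unit sphere with respect to the spherical Lebesgue measure. -/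
def sphInt (n : ℕ) (g : Euc n → ℝ) : ℝ :=
  ∫ x : USphere n, g x ∂(sphMeasure n)

/-- The covariant (spherical) gradient on `S^{n-1}` of the restriction of `F`,
i.e. the tangential component of the Euclidean gradient of `F`. -/
def sphGrad (n : ℕ) (F : Euc n → ℝ) (x : Euc n) : Euc n :=
  gradient F x - ⟪gradient F x, x⟫ • x

/-- `√(|∇h|² + h²)` for the (1-homogeneous extension of the) function `F` at `x`. -/
def radTerm (n : ℕ) (F : Euc n → ℝ) (x : Euc n) : ℝ :=
  Real.sqrt (‖sphGrad n F x‖ ^ 2 + F x ^ 2)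

/-- The Euclidean Hessian operator of `F` at `x`. For a positively 1-homogeneous `F`
this operator kills `x` and restricts on `x^⊥` to the matrix `∇²h + hI` of the
spherical Hessian. -/
def hessOp (n : ℕ) (F : Euc n → ℝ) (x : Euc n) : Euc n →L[ℝ] Euc n :=
  fderiv ℝ (gradient F) x

/-- `det(∇²h + hI)` at `x ∈ S^{n-1}`: the determinant of the restriction of the Euclidean
Hessian of the 1-homogeneous extension to `x^⊥`, computed as the determinant of
`Hess F + x ⊗ x` on all of `ℝⁿ` (the Hessian of a 1-homogeneous function kills `x`). -/
def sphDet (n : ℕ) (F : Euc n → ℝ) (x : Euc n) : ℝ :=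
  LinearMap.det
    ((hessOp n F x + (innerSL ℝ x).smulRight x : Euc n →L[ℝ] Euc n) : Euc n →ₗ[ℝ] Euc n)

/-- `F` is the (1-homogeneously extended) support function of a smooth strictly convex
body with the origin in its interior: it is smooth away from the origin, positively
1-homogeneous, positive, and `∇²h + hI` is positive definite on each tangent space. -/
structure IsSupportFn (n : ℕ) (F : Euc n → ℝ) : Prop where
  smooth : ContDiffOn ℝ (⊤ : ℕ∞) F {(0 : Euc n)}ᶜ
  homog : ∀ c : ℝ, 0 < c → ∀ x : Euc n, F (c • x) = c * F x
  pos : ∀ x ∈ USphere n, 0 < F x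
  posdef : ∀ x ∈ USphere n, ∀ v : Euc n, v ≠ 0 → ⟪x, v⟫ = 0 →
    0 < ⟪v, hessOp n F x v⟫

/-- The convex body determined by the support function `F`. -/
def bodyOf (n : ℕ) (F : Euc n → ℝ) : Set (Euc n) :=
  {y | ∀ x ∈ USphere n, ⟪x, y⟫ ≤ F x}

/-- The radial function of the convex body with support function `F`. -/
def radialFn (n : ℕ) (F : Euc n → ℝ) (u : Euc n) : ℝ :=
  sSup {r : ℝ | 0 < r ∧ r • u ∈ bodyOf n F}

/-- The normalization factor `η` of the flow. -/
def flowEta (n : ℕ) (f : Euc n → ℝ) (φ : ℝ → ℝ) (h : Euc n → ℝ) : ℝ :=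
  sphArea n / sphInt n (fun x => f x / φ (1 / h x))

/-- `H : ℝ → Euc n → ℝ` is (the family of support functions of) a smooth, origin-symmetric,
strictly convex solution of the flow on the time interval `J`. -/
structure IsFlowSol (n : ℕ) (f : Euc n → ℝ) (φ : ℝ → ℝ) (J : Set ℝ)
    (H : ℝ → Euc n → ℝ) : Prop where
  smooth : ContDiffOn ℝ (⊤ : ℕ∞) (fun p : ℝ × Euc n => H p.1 p.2) (J ×ˢ {(0 : Euc n)}ᶜ)
  body : ∀ t ∈ J, IsSupportFn n (H t)
  symm : ∀ t ∈ J, ∀ x : Euc n, H t (-x) = H t x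
  eqn : ∀ t ∈ J, ∀ x ∈ USphere n,
    HasDerivWithinAt (fun s => H s x)
      (H t x - flowEta n f φ (H t) * f x * radTerm n (H t) x ^ n /
        (φ (1 / H t x) * sphDet n (H t) x)) J t

/-- Condition (i) of the Orlicz-Aleksandrov flow theorem. -/
def CondI (n : ℕ) (f : Euc n → ℝ) (φ : ℝ → ℝ) (h₀ : Euc n → ℝ) : Prop :=
  ∃ R : ℝ → ℝ, (∀ s ∈ Ioi (0 : ℝ), 0 < R s) ∧ StrictMonoOn R (Ioi 0) ∧
    Tendsto R (𝓝[>] (0 : ℝ)) (𝓝 0) ∧ Tendsto R atTop atTop ∧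
    (∀ s ∈ Ioi (0 : ℝ), IntegrableOn (fun t => 1 / (t * φ t)) (Ioo 0 s) ∧
      R s = ∫ t in Ioo (0 : ℝ) s, 1 / (t * φ t)) ∧
    (∀ s ∈ Ioi (0 : ℝ), HasDerivAt R (1 / (s * φ s)) s ∧ 1 / (s * φ s) ≠ 0) ∧
    ∃ Chat : ℝ, 0 < Chat ∧
      (∀ θ ∈ USphere n,
        sphInt n (fun x => f x * R (1 / |⟪x, θ⟫|)) ≤ Chat) ∧
      Chat < sphInt n (fun x => f x * R (1 / h₀ x))

/-- Condition (ii) of the Orlicz-Aleksandrov flow theorem. -/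
def CondII (φ : ℝ → ℝ) : Prop :=
  ∃ R : ℝ → ℝ, (∀ s ∈ Ioi (0 : ℝ), 0 < R s) ∧ StrictAntiOn R (Ioi 0) ∧
    Tendsto R (𝓝[>] (0 : ℝ)) atTop ∧ Tendsto R atTop (𝓝 0) ∧
    (∀ s ∈ Ioi (0 : ℝ), IntegrableOn (fun t => 1 / (t * φ t)) (Ioi s) ∧
      R s = ∫ t in Ioi s, 1 / (t * φ t)) ∧
    (∀ s ∈ Ioi (0 : ℝ), HasDerivAt R (-(1 / (s * φ s))) s ∧ 1 / (s * φ s) ≠ 0)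

/-! ### Homogeneity relations for support functions -/

namespace IsSupportFn

variable {n : ℕ} {F : Euc n → ℝ}

lemma contDiffAt (hF : IsSupportFn n F) {x : Euc n} (hx : x ≠ 0) :
    ContDiffAt ℝ (⊤ : ℕ∞) F x :=
  hF.smooth.contDiffAt (isOpen_compl_singleton.mem_nhds hx)

lemma differentiableAt (hF : IsSupportFn n F) {x : Euc n} (hx : x ≠ 0) :
    DifferentiableAt ℝ F x :=
  (hF.contDiffAt hx).differentiableAt (by simp)

lemma contDiffAt_gradient (hF : IsSupportFn n F) {x : Euc n} (hx : x ≠ 0) :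
    ContDiffAt ℝ (⊤ : ℕ∞) (gradient F) x := by
  have h : ContDiffAt ℝ (⊤ : ℕ∞) (fderiv ℝ F) x :=
    (hF.contDiffAt hx).fderiv_right (m := (⊤ : ℕ∞)) (by simp)
  exact (InnerProductSpace.toDual ℝ (Euc n)).symm.contDiff.contDiffAt.comp x h

lemma hasFDerivAt_gradient (hF : IsSupportFn n F) {x : Euc n} (hx : x ≠ 0) :
    HasFDerivAt (gradient F) (hessOp n F x) x :=
  ((hF.contDiffAt_gradient hx).differentiableAt (by simp)).hasFDerivAt

lemma gradient_smul (hF : IsSupportFn n F) {c : ℝ} (hc : 0 < c) (x : Euc n) :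
    gradient F (c • x) = gradient F x := by
  have h1 := fderiv_comp_smul (𝕜 := ℝ) (f := F) (x := x) c
  have h2 : (fun y => F (c • y)) = c • F := by
    ext y; simp [hF.homog c hc y]
  rw [h2, fderiv_const_smul_field] at h1
  have h3 := smul_right_injective _ hc.ne' h1
  simp only [gradient, h3]

/-- Euler's relation for the 1-homogeneous function `F`. -/
lemma inner_gradient_self (hF : IsSupportFn n F) {x : Euc n} (hx : x ≠ 0) :
    ⟪gradient F x, x⟫ = F x := by
  have h0 : HasDerivAt (fun c : ℝ => c • x) x 1 := by
    simpa using (hasDerivAt_id (1 : ℝ)).smul_const x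
  have h1 : HasDerivAt (fun c : ℝ => F (c • x)) (fderiv ℝ F x x) 1 :=
    HasFDerivAt.comp_hasDerivAt (1 : ℝ) (l := F) (f := fun c : ℝ => c • x)
      (by simpa using (hF.differentiableAt hx).hasFDerivAt) h0
  have h2 : HasDerivAt (fun c : ℝ => c * F x) (F x) 1 := by
    simpa using (hasDerivAt_id (1 : ℝ)).mul_const (F x)
  have h3 : (fun c : ℝ => F (c • x)) =ᶠ[𝓝 1] fun c => c * F x := by
    filter_upwards [lt_mem_nhds (zero_lt_one (α := ℝ))] with c hc using hF.homog c hc x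
  rw [inner_gradient_left]
  exact h1.unique (h2.congr_of_eventuallyEq h3)

lemma hessOp_self (hF : IsSupportFn n F) {x : Euc n} (hx : x ≠ 0) :
    hessOp n F x x = 0 := by
  have h0 : HasDerivAt (fun c : ℝ => c • x) x 1 := by
    simpa using (hasDerivAt_id (1 : ℝ)).smul_const x
  have h1 : HasDerivAt (fun c : ℝ => gradient F (c • x)) (hessOp n F x x) 1 :=
    HasFDerivAt.comp_hasDerivAt (1 : ℝ) (l := gradient F) (f := fun c : ℝ => c • x)
      (by simpa using hF.hasFDerivAt_gradient hx) h0
  have h3 : (fun c : ℝ => gradient F (c • x)) =ᶠ[𝓝 1] fun _ => gradient F x := by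
    filter_upwards [lt_mem_nhds (zero_lt_one (α := ℝ))] with c hc using hF.gradient_smul hc x
  exact h1.unique ((hasDerivAt_const (1 : ℝ) (gradient F x)).congr_of_eventuallyEq h3)

/-- The range of the Hessian is orthogonal to `x`: differentiate Euler's relation. -/
lemma inner_hessOp (hF : IsSupportFn n F) {x : Euc n} (hx : x ≠ 0) (w : Euc n) :
    ⟪x, hessOp n F x w⟫ = 0 := by
  have h1 := (hF.hasFDerivAt_gradient hx).inner ℝ (hasFDerivAt_id x)
  have h3 : (fun y => ⟪gradient F y, id y⟫) =ᶠ[𝓝 x] F := by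
    filter_upwards [isOpen_compl_singleton.mem_nhds hx] with y hy using
      hF.inner_gradient_self hy
  have h4 := (h1.congr_of_eventuallyEq h3.symm).unique (hF.differentiableAt hx).hasFDerivAt
  have h5 := congrArg (fun L => L w) h4
  simp only [← inner_gradient_left (𝕜 := ℝ)] at h5
  simp [fderivInnerCLM_apply, -inner_gradient_left] at h5
  rw [real_inner_comm]
  linarith [h5, inner_gradient_left (𝕜 := ℝ) (f := F) (x := x) (y := w)]

lemma pos' (hF : IsSupportFn n F) {x : Euc n} (hx : x ≠ 0) : 0 < F x := by
  have h1 : 0 < ‖x‖ := norm_pos_iff.2 hx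
  have h2 : ‖x‖⁻¹ • x ∈ USphere n := by simp [norm_smul, h1.ne']
  have h3 := hF.pos _ h2
  rw [hF.homog _ (inv_pos.2 h1)] at h3
  exact (pos_iff_pos_of_mul_pos h3).1 (inv_pos.2 h1)

lemma radTerm_eq (hF : IsSupportFn n F) {x : Euc n} (hx : x ∈ USphere n) :
    radTerm n F x = ‖gradient F x‖ := by
  have hx1 : ‖x‖ = 1 := by simpa using hx
  have hx0 : x ≠ 0 := by rintro rfl; simp at hx1
  have hE := hF.inner_gradient_self hx0
  have : ‖sphGrad n F x‖ ^ 2 + F x ^ 2 = ‖gradient F x‖ ^ 2 := by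
    rw [sphGrad, hE, norm_sub_sq_real, real_inner_smul_right, hE, norm_smul, hx1]
    simp
    ring
  rw [radTerm, this, Real.sqrt_sq (norm_nonneg _)]

lemma gradient_ne_zero (hF : IsSupportFn n F) {x : Euc n} (hx : x ≠ 0) :
    gradient F x ≠ 0 := by
  intro h
  have := hF.inner_gradient_self hx
  rw [h, inner_zero_left] at this
  exact (hF.pos' hx).ne this

end IsSupportFn

/-! ### The gradient map of `F² / 2` -/

/-- The gradient map of `F² / 2`. -/
def gradMap (n : ℕ) (F : Euc n → ℝ) (y : Euc n) : Euc n := F y • gradient F y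

/-- The derivative of `gradMap n F`, i.e. the Hessian of `F² / 2`. -/
def gradMapDeriv (n : ℕ) (F : Euc n → ℝ) (y : Euc n) : Euc n →L[ℝ] Euc n :=
  F y • hessOp n F y + (innerSL ℝ (gradient F y)).smulRight (gradient F y)

namespace IsSupportFn

variable {n : ℕ} {F : Euc n → ℝ}

lemma gradMap_smul (hF : IsSupportFn n F) {c : ℝ} (hc : 0 < c) (x : Euc n) :
    gradMap n F (c • x) = c • gradMap n F x := by
  simp [gradMap, hF.homog c hc, hF.gradient_smul hc, mul_smul]

lemma hasFDerivAt_gradMap (hF : IsSupportFn n F) {x : Euc n} (hx : x ≠ 0) :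
    HasFDerivAt (gradMap n F) (gradMapDeriv n F x) x := by
  have h := (hF.differentiableAt hx).hasFDerivAt.smul (hF.hasFDerivAt_gradient hx)
  have e : gradMapDeriv n F x =
      F x • hessOp n F x + (fderiv ℝ F x).smulRight (gradient F x) := by
    ext1 w
    simp [gradMapDeriv]
  rw [e]
  exact h

lemma gradMapDeriv_smul (hF : IsSupportFn n F) {c : ℝ} (hc : 0 < c) {x : Euc n} (hx : x ≠ 0) :
    gradMapDeriv n F (c • x) = gradMapDeriv n F x := by
  have h1 := fderiv_comp_smul (𝕜 := ℝ) (f := gradMap n F) (x := x) c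
  have h2 : (fun y => gradMap n F (c • y)) = c • gradMap n F := by
    ext1 y; simp [hF.gradMap_smul hc y]
  rw [h2, fderiv_const_smul_field] at h1
  have h3 := smul_right_injective _ hc.ne' h1
  rw [(hF.hasFDerivAt_gradMap hx).fderiv,
    (hF.hasFDerivAt_gradMap (smul_ne_zero hc.ne' hx)).fderiv] at h3
  exact h3.symm

/-- The decomposition `w = v + c x` reduces the quadratic form of the Hessian to `x^⊥`. -/
lemma inner_hessOp_nonneg (hF : IsSupportFn n F) {x : Euc n} (hx : x ∈ USphere n) (w : Euc n) :
    0 ≤ ⟪w, hessOp n F x w⟫ ∧ (⟪w, hessOp n F x w⟫ = 0 → w = ⟪x, w⟫ • x) := by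
  have hx1 : ‖x‖ = 1 := by simpa using hx
  have hx0 : x ≠ 0 := by rintro rfl; simp at hx1
  set v := w - ⟪x, w⟫ • x with hv
  have hw : w = v + ⟪x, w⟫ • x := by simp [hv]
  have hxv : ⟪x, v⟫ = 0 := by
    rw [hv, inner_sub_right, real_inner_smul_right, real_inner_self_eq_norm_sq, hx1]; ring
  have h1 : ⟪w, hessOp n F x w⟫ = ⟪v, hessOp n F x v⟫ := by
    have h2 : hessOp n F x w = hessOp n F x v := by
      conv_lhs => rw [hw, map_add, map_smul, hF.hessOp_self hx0]
      simp
    rw [h2]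
    conv_lhs => rw [hw, inner_add_left, real_inner_smul_left, hF.inner_hessOp hx0]
    simp
  rw [h1]
  by_cases hv0 : v = 0
  · simp [hv0]; exact sub_eq_zero.1 (hv ▸ hv0)
  · have := hF.posdef x hx v hv0 hxv
    exact ⟨this.le, fun h => absurd h this.ne'⟩

/-- The Hessian of `F² / 2` is positive definite away from the origin. -/
lemma gradMapDeriv_pos (hF : IsSupportFn n F) {y : Euc n} (hy : y ≠ 0) {w : Euc n} (hw : w ≠ 0) :
    0 < ⟪w, gradMapDeriv n F y w⟫ := by
  have h1 : 0 < ‖y‖ := norm_pos_iff.2 hy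
  obtain ⟨x, hx, hyx⟩ : ∃ x ∈ USphere n, y = ‖y‖ • x :=
    ⟨‖y‖⁻¹ • y, by simp [norm_smul, h1.ne'], by simp [smul_smul, h1.ne']⟩
  have hx1 : ‖x‖ = 1 := by simpa using hx
  have hx0 : x ≠ 0 := by rintro rfl; simp at hx1
  rw [hyx, hF.gradMapDeriv_smul h1 hx0]
  have hform : ⟪w, gradMapDeriv n F x w⟫ =
      F x * ⟪w, hessOp n F x w⟫ + ⟪gradient F x, w⟫ ^ 2 := by
    simp only [gradMapDeriv, add_apply, smul_apply,
      ContinuousLinearMap.smulRight_apply, innerSL_apply_apply, inner_add_right,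
      real_inner_smul_right]
    rw [real_inner_comm w (gradient F x)]; ring
  rw [hform]
  obtain ⟨h2, h3⟩ := hF.inner_hessOp_nonneg hx w
  have hFx := hF.pos x hx
  rcases h2.eq_or_lt with h | h
  · have h4 := h3 h.symm
    have h5 : ⟪x, w⟫ ≠ 0 := by intro h6; rw [h6, zero_smul] at h4; exact hw h4
    have h6 : ⟪gradient F x, w⟫ = ⟪x, w⟫ * F x := by
      conv_lhs => rw [h4, real_inner_smul_right, hF.inner_gradient_self hx0]
    rw [← h, h6]; positivity
  · positivity

/-- Along a segment that avoids the origin the gradient map is strictly monotone; a segment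
through the origin is excluded by the sign of `⟪gradMap y, y⟫ = F y ^ 2`. -/
lemma gradMap_injOn (hF : IsSupportFn n F) : InjOn (gradMap n F) {(0 : Euc n)}ᶜ := by
  intro a ha b hb hab
  by_contra hne
  have hself : ∀ y : Euc n, y ≠ 0 → 0 < ⟪gradMap n F y, y⟫ := fun y hy => by
    rw [gradMap, real_inner_smul_left, hF.inner_gradient_self hy]
    exact mul_pos (hF.pos' hy) (hF.pos' hy)
  by_cases hseg : ∀ t ∈ Icc (0 : ℝ) 1, a + t • (b - a) ≠ 0
  · have hd : ∀ t ∈ Icc (0 : ℝ) 1, HasDerivAt (fun t : ℝ => ⟪b - a, gradMap n F (a + t • (b - a))⟫)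
        ⟪b - a, gradMapDeriv n F (a + t • (b - a)) (b - a)⟫ t := by
      intro t ht
      have h0 : HasDerivAt (fun t : ℝ => a + t • (b - a)) (b - a) t := by
        simpa using ((hasDerivAt_id t).smul_const (b - a)).const_add a
      have h1 := (hF.hasFDerivAt_gradMap (hseg t ht)).comp_hasDerivAt t h0
      simpa using (hasDerivAt_const t (b - a)).inner ℝ h1
    have hmono := strictMonoOn_of_deriv_pos (convex_Icc (0 : ℝ) 1)
      (fun t ht => (hd t ht).continuousAt.continuousWithinAt) (fun t ht => by
        rw [interior_Icc] at ht
        have ht' := Ioo_subset_Icc_self ht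
        rw [(hd t ht').deriv]
        exact hF.gradMapDeriv_pos (hseg t ht') (sub_ne_zero.2 (Ne.symm hne)))
    have := hmono (left_mem_Icc.2 zero_le_one) (right_mem_Icc.2 zero_le_one) zero_lt_one
    simp [hab] at this
  · push Not at hseg
    obtain ⟨t, ht, h0⟩ := hseg
    have h1 : (1 - t) • a = -(t • b) := by
      rw [eq_neg_iff_add_eq_zero, ← h0, sub_smul, smul_sub, one_smul]; abel
    have h2 : (1 - t) * ⟪gradMap n F a, a⟫ = - (t * ⟪gradMap n F b, b⟫) := by
      rw [← real_inner_smul_right, h1, inner_neg_right, real_inner_smul_right, hab]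
    have pa := hself a ha
    have pb := hself b hb
    have h3 : 0 ≤ (1 - t) * ⟪gradMap n F a, a⟫ := mul_nonneg (by linarith [ht.2]) pa.le
    have h4 : 0 ≤ t * ⟪gradMap n F b, b⟫ := mul_nonneg ht.1 pb.le
    have h5 : t = 0 := by
      have : t * ⟪gradMap n F b, b⟫ = 0 := by linarith
      exact (mul_eq_zero.1 this).resolve_right pb.ne'
    have h6 : 1 - t = 0 := by
      have : (1 - t) * ⟪gradMap n F a, a⟫ = 0 := by linarith
      exact (mul_eq_zero.1 this).resolve_right pa.ne'
    linarith

lemma gradMap_ne_zero (hF : IsSupportFn n F) {x : Euc n} (hx : x ≠ 0) : gradMap n F x ≠ 0 :=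
  smul_ne_zero (hF.pos' hx).ne' (hF.gradient_ne_zero hx)

/-- A preimage of `z` lies on the ray through a maximum point of `x ↦ ⟪z, x⟫ / F x` on the
sphere, because at such a point `∇F` is proportional to `z`. -/
lemma gradMap_image (hF : IsSupportFn n F) :
    gradMap n F '' {(0 : Euc n)}ᶜ = {(0 : Euc n)}ᶜ := by
  apply Subset.antisymm
  · rintro _ ⟨x, hx, rfl⟩
    exact hF.gradMap_ne_zero hx
  intro z hz
  have hz0 : z ≠ 0 := hz
  have hzn : 0 < ‖z‖ := norm_pos_iff.2 hz0
  have hzs : ‖z‖⁻¹ • z ∈ USphere n := by simp [norm_smul, hzn.ne']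
  have hne0 : ∀ y ∈ USphere n, y ≠ 0 := by rintro y hy rfl; simp at hy
  let q : Euc n → ℝ := fun y => ⟪z, y⟫ / F y
  have hqd : ∀ y ≠ 0, DifferentiableAt ℝ q y := fun y hy =>
    ((innerSL ℝ z).differentiableAt (x := y)).mul
      ((hF.differentiableAt hy).inv (hF.pos' hy).ne')
  obtain ⟨x, hx, hmax⟩ := (isCompact_sphere (0 : Euc n) 1).exists_isMaxOn ⟨_, hzs⟩
    (fun y hy => (hqd y (hne0 y hy)).continuousAt.continuousWithinAt)
  have hx0 := hne0 x hx
  have hqh : ∀ y ≠ 0, q (‖y‖⁻¹ • y) = q y := fun y hy => by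
    have := inv_pos.2 (norm_pos_iff.2 hy)
    simp only [q]
    rw [real_inner_smul_right, hF.homog _ this, mul_div_mul_left _ _ this.ne']
  have hloc : IsLocalMax q x := by
    filter_upwards [isOpen_compl_singleton.mem_nhds hx0] with y hy
    rw [← hqh y hy]
    exact hmax (by simp [norm_smul, norm_ne_zero_iff.2 hy])
  have hqpos : 0 < q x := by
    refine lt_of_lt_of_le ?_ (hmax hzs)
    show 0 < q _
    rw [hqh z hz0]
    refine div_pos ?_ (hF.pos' hz0)
    rw [real_inner_self_eq_norm_sq]; positivity
  have hFx := hF.pos' hx0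
  have hz_eq : z = q x • gradient F x := by
    have e1 : (fun y => q y * F y) =ᶠ[𝓝 x] fun y => ⟪z, y⟫ := by
      filter_upwards [isOpen_compl_singleton.mem_nhds hx0] with y hy
      exact div_mul_cancel₀ _ (hF.pos' hy).ne'
    have d1 := ((hqd x hx0).hasFDerivAt.mul (hF.differentiableAt hx0).hasFDerivAt)
    rw [hloc.fderiv_eq_zero] at d1
    have d2 := (d1.congr_of_eventuallyEq e1.symm).unique (innerSL ℝ z).hasFDerivAt
    refine ext_inner_right ℝ fun w => ?_
    have := congrArg (fun L => L w) d2
    simp at this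
    rw [real_inner_smul_left, inner_gradient_left]
    exact this.symm
  have hc : 0 < q x / F x := div_pos hqpos hFx
  refine ⟨(q x / F x) • x, smul_ne_zero hc.ne' hx0, ?_⟩
  rw [hF.gradMap_smul hc, gradMap, smul_smul, div_mul_cancel₀ _ hFx.ne', ← hz_eq]

end IsSupportFn

/-! ### Determinants -/

namespace IsSupportFn

variable {n : ℕ} {F : Euc n → ℝ}

lemma sphDet_pos (hF : IsSupportFn n F) {x : Euc n} (hx : x ∈ USphere n) :
    0 < sphDet n F x := by
  have hx1 : ‖x‖ = 1 := by simpa using hx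
  have hx0 : x ≠ 0 := by rintro rfl; simp at hx1
  set B : Euc n →L[ℝ] Euc n := hessOp n F x + (innerSL ℝ x).smulRight x with hB
  have hform : ∀ w, ⟪w, B w⟫ = ⟪w, hessOp n F x w⟫ + ⟪x, w⟫ ^ 2 := by
    intro w
    simp only [hB, add_apply, ContinuousLinearMap.smulRight_apply, innerSL_apply_apply,
      inner_add_right, real_inner_smul_right]
    rw [real_inner_comm w x]; ring
  have hpos : ∀ w, w ≠ 0 → 0 < ⟪w, B w⟫ := by
    intro w hw
    rw [hform]
    obtain ⟨h2, h3⟩ := hF.inner_hessOp_nonneg hx w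
    rcases h2.eq_or_lt with h | h
    · have h4 := h3 h.symm
      have h5 : ⟪x, w⟫ ≠ 0 := by intro h6; rw [h6, zero_smul] at h4; exact hw h4
      rw [← h]; positivity
    · positivity
  -- The segment from the identity to `B` consists of operators with nonzero determinant.
  let d : ℝ → ℝ := fun s => ((1 - s) • ContinuousLinearMap.id ℝ (Euc n) + s • B).det
  have hdc : Continuous d := ContinuousLinearMap.continuous_det.comp (by fun_prop)
  have hd0 : ∀ s ∈ Icc (0 : ℝ) 1, d s ≠ 0 := by
    intro s hs h0
    have h1 := LinearMap.bot_lt_ker_of_det_eq_zero h0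
    obtain ⟨w, hw, hw0⟩ := (Submodule.ne_bot_iff _).1 h1.ne'
    have h2 : (1 - s) • w + s • B w = 0 := by simpa using hw
    have h3 : (1 - s) * ‖w‖ ^ 2 + s * ⟪w, B w⟫ = 0 := by
      have := congrArg (fun v => ⟪w, v⟫) h2
      simpa [inner_add_right, real_inner_smul_right, real_inner_self_eq_norm_sq] using this
    have h4 := hpos w hw0
    have h5 : 0 < ‖w‖ ^ 2 := by have := norm_pos_iff.2 hw0; positivity
    rcases hs.1.eq_or_lt with h | h
    · rw [← h] at h3; simp at h3; exact hw0 h3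
    · have : 0 ≤ (1 - s) * ‖w‖ ^ 2 := mul_nonneg (by linarith [hs.2]) h5.le
      have := mul_pos h h4
      linarith
  have hd_zero : d 0 = 1 := by simp [d, ContinuousLinearMap.det]
  have hd_one : d 1 = sphDet n F x := by simp [d, ContinuousLinearMap.det, sphDet, hB]
  rw [← hd_one]
  by_contra hle
  push Not at hle
  obtain ⟨s, hs, hs0⟩ := intermediate_value_Icc' (zero_le_one (α := ℝ)) hdc.continuousOn
    (show (0 : ℝ) ∈ Icc (d 1) (d 0) from ⟨hle, by rw [hd_zero]; exact zero_le_one⟩)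
  exact hd0 s hs hs0

/-- With `A = D²F(x)` and `α = ∇F(x) / F(x) - x ⟂ x`, the Hessian `F A + ∇F ⊗ ∇F` factors as
`F • (1 + α ⊗ x) (A + x ⊗ x) (1 + (F - 1) x ⊗ x) (1 + x ⊗ α)`, in which the outer factors are
transvections of determinant one. -/
lemma det_gradMapDeriv (hF : IsSupportFn n F) {x : Euc n} (hx : x ∈ USphere n) :
    (gradMapDeriv n F x).det = F x ^ (n + 1) * sphDet n F x := by
  have hx1 : ‖x‖ = 1 := by simpa using hx
  have hx0 : x ≠ 0 := by rintro rfl; simp at hx1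
  have hFx := hF.pos' hx0
  have hxx : ⟪x, x⟫ = 1 := by rw [real_inner_self_eq_norm_sq, hx1]; norm_num
  set α : Euc n := (F x)⁻¹ • gradient F x - x with hα
  have hxα : ⟪x, α⟫ = 0 := by
    rw [hα, inner_sub_right, real_inner_smul_right, real_inner_comm, hF.inner_gradient_self hx0,
      hxx, inv_mul_cancel₀ hFx.ne', sub_self]
  have hg : gradient F x = F x • (x + α) := by
    simp [hα, smul_smul, hFx.ne']
  have hcol : ((gradMapDeriv n F x : Euc n →L[ℝ] Euc n) : Euc n →ₗ[ℝ] Euc n) =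
      F x • (LinearMap.transvection (innerₛₗ ℝ x) α ∘ₗ
        ((hessOp n F x + (innerSL ℝ x).smulRight x : Euc n →L[ℝ] Euc n) : Euc n →ₗ[ℝ] Euc n) ∘ₗ
        LinearMap.transvection (innerₛₗ ℝ x) ((F x - 1) • x) ∘ₗ
        LinearMap.transvection (innerₛₗ ℝ α) x) := by
    refine LinearMap.ext fun w => ?_
    have hAx := hF.hessOp_self hx0
    have hxA := hF.inner_hessOp hx0
    simp only [gradMapDeriv, hg, ContinuousLinearMap.coe_coe, LinearMap.smul_apply, add_apply, smul_apply,
      ContinuousLinearMap.smulRight_apply, innerSL_apply_apply, LinearMap.comp_apply,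
      LinearMap.transvection.apply, innerₛₗ_apply_apply, map_add, map_smul, hAx, hxA,
      hxx, zero_add]
    module
  have hn : Module.finrank ℝ (Euc n) = n := by simp
  rw [ContinuousLinearMap.det, hcol, LinearMap.det_smul, LinearMap.det_comp, LinearMap.det_comp,
    LinearMap.det_comp, LinearMap.transvection.det, LinearMap.transvection.det,
    LinearMap.transvection.det, hn]
  simp only [innerₛₗ_apply_apply, real_inner_smul_right, hxx, hxα, real_inner_comm x α]
  rw [sphDet]
  ring

end IsSupportFn

/-! ### Polar coordinates and the radial Gauss map -/

lemma ne_zero_of_mem_USphere {n : ℕ} {x : Euc n} (hx : x ∈ USphere n) : x ≠ 0 := by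
  rintro rfl; simp at hx

/-- Integration in polar coordinates. -/
lemma lintegral_polar {n : ℕ} (g : Euc n → ENNReal)
    (hg : Measurable fun y : ({(0 : Euc n)}ᶜ : Set (Euc n)) => g y) :
    ∫⁻ y in {(0 : Euc n)}ᶜ, g y =
      ∫⁻ x : USphere n, ∫⁻ r : Ioi (0 : ℝ), g ((r : ℝ) • (x : Euc n))
        ∂(Measure.volumeIoiPow (n - 1)) ∂(sphMeasure n) := by
  have hs : MeasurableSet ({(0 : Euc n)}ᶜ : Set (Euc n)) := (measurableSet_singleton _).compl
  have hmp := (volume : Measure (Euc n)).measurePreserving_homeomorphUnitSphereProd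
  have hn : Module.finrank ℝ (Euc n) = n := by simp
  rw [hn] at hmp
  have hme : MeasurableEmbedding (homeomorphUnitSphereProd (Euc n)) :=
    (homeomorphUnitSphereProd (Euc n)).measurableEmbedding
  have h1 := hmp.lintegral_comp_emb hme
    (fun p => g ((homeomorphUnitSphereProd (Euc n)).symm p : Euc n))
  simp only [Homeomorph.symm_apply_apply] at h1
  rw [← lintegral_subtype_comap hs, h1, lintegral_prod]
  · simp [sphMeasure]
  · exact (hg.comp (homeomorphUnitSphereProd (Euc n)).symm.measurable).aemeasurable

lemma continuous_sphere_of_continuousOn {n : ℕ} {α : Type*} [TopologicalSpace α]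
    {g : Euc n → α} (hg : ContinuousOn g {(0 : Euc n)}ᶜ) :
    Continuous fun x : USphere n => g x :=
  hg.comp_continuous continuous_subtype_val fun x => ne_zero_of_mem_USphere x.2

namespace IsSupportFn

variable {n : ℕ} {F : Euc n → ℝ}

lemma continuousOn_gradient (hF : IsSupportFn n F) :
    ContinuousOn (gradient F) {(0 : Euc n)}ᶜ :=
  fun _ hx => (hF.contDiffAt_gradient hx).continuousAt.continuousWithinAt

lemma continuousOn_hessOp (hF : IsSupportFn n F) :
    ContinuousOn (hessOp n F) {(0 : Euc n)}ᶜ :=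
  fun _ hx => ((hF.contDiffAt_gradient hx).fderiv_right (m := (⊤ : ℕ∞))
    (by simp)).continuousAt.continuousWithinAt

lemma continuous_coe (hF : IsSupportFn n F) : Continuous fun x : USphere n => F x :=
  continuous_sphere_of_continuousOn hF.smooth.continuousOn

lemma continuous_radTerm (hF : IsSupportFn n F) :
    Continuous fun x : USphere n => radTerm n F x := by
  have h := (continuous_sphere_of_continuousOn hF.continuousOn_gradient).norm
  convert h using 2 with x
  exact hF.radTerm_eq x.2

lemma radTerm_pos (hF : IsSupportFn n F) {x : Euc n} (hx : x ∈ USphere n) :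
    0 < radTerm n F x := by
  rw [hF.radTerm_eq hx]
  exact norm_pos_iff.2 (hF.gradient_ne_zero (ne_zero_of_mem_USphere hx))

lemma continuous_sphDet (hF : IsSupportFn n F) :
    Continuous fun x : USphere n => sphDet n F x := by
  have h1 : ContinuousOn
      (fun x : Euc n => hessOp n F x + (innerSL ℝ x).smulRight x) {(0 : Euc n)}ᶜ := by
    refine hF.continuousOn_hessOp.add (Continuous.continuousOn ?_)
    fun_prop
  exact continuous_sphere_of_continuousOn
    (ContinuousLinearMap.continuous_det.comp_continuousOn h1)

lemma continuousOn_gradMapDeriv (hF : IsSupportFn n F) :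
    ContinuousOn (gradMapDeriv n F) {(0 : Euc n)}ᶜ := by
  have h1 := hF.continuousOn_gradient
  have h2 := hF.continuousOn_hessOp
  have h4 : Continuous fun v : Euc n => (innerSL ℝ v).smulRight v := by fun_prop
  exact (hF.smooth.continuousOn.smul h2).add (h4.comp_continuousOn h1)

lemma continuousOn_gradMap (hF : IsSupportFn n F) :
    ContinuousOn (gradMap n F) {(0 : Euc n)}ᶜ :=
  hF.smooth.continuousOn.smul hF.continuousOn_gradient

/-- Change of variables along the radial Gauss map: the total mass of the density
`h det(∇²h + hI) (|∇h|² + h²)^{-n/2}` is the area of the sphere. It follows by computing the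
volume of the unit ball through the diffeomorphism `gradMap` in polar coordinates. -/
lemma sphInt_eq_sphArea (hF : IsSupportFn n F) (hn : n ≠ 0) :
    sphInt n (fun x => F x * sphDet n F x / radTerm n F x ^ n) = sphArea n := by
  have hs : MeasurableSet ({(0 : Euc n)}ᶜ : Set (Euc n)) := (measurableSet_singleton _).compl
  have hnpos : (0 : ℝ) < n := by positivity
  have hn1 : ((n - 1 : ℕ) : ℝ) + 1 = n := by
    rw [Nat.cast_pred (Nat.pos_of_ne_zero hn)]; ring
  have hcv := lintegral_image_eq_lintegral_abs_det_fderiv_mul volume hs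
    (fun x hx => (hF.hasFDerivAt_gradMap hx).hasFDerivWithinAt) hF.gradMap_injOn
    ((ball (0 : Euc n) 1).indicator 1)
  have hleft : ∫⁻ y in {(0 : Euc n)}ᶜ, (ball (0 : Euc n) 1).indicator (1 : Euc n → ENNReal) y =
      volume (ball (0 : Euc n) 1) := by
    have : NeZero n := ⟨hn⟩
    have : Nonempty (Fin n) := ⟨0⟩
    rw [lintegral_indicator_one measurableSet_ball, Measure.restrict_apply measurableSet_ball,
      ← Set.sdiff_eq, measure_sdiff_null (measure_singleton _)]
  rw [hF.gradMap_image, hleft, lintegral_polar] at hcv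
  swap
  · have h1 : Continuous fun y : ({(0 : Euc n)}ᶜ : Set (Euc n)) => (gradMapDeriv n F y).det :=
      (ContinuousLinearMap.continuous_det.comp_continuousOn
        hF.continuousOn_gradMapDeriv).comp_continuous continuous_subtype_val fun y => y.2
    have h2 : Continuous fun y : ({(0 : Euc n)}ᶜ : Set (Euc n)) => gradMap n F y :=
      hF.continuousOn_gradMap.comp_continuous continuous_subtype_val fun y => y.2
    have h3 : Measurable ((ball (0 : Euc n) 1).indicator (1 : Euc n → ENNReal)) :=
      measurable_one.indicator measurableSet_ball
    exact h1.abs.measurable.ennreal_ofReal.mul (h3.comp h2.measurable)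
  have hinner : ∀ x : USphere n,
      ∫⁻ r : Ioi (0 : ℝ), ENNReal.ofReal |(gradMapDeriv n F ((r : ℝ) • (x : Euc n))).det| *
        (ball (0 : Euc n) 1).indicator 1 (gradMap n F ((r : ℝ) • (x : Euc n)))
        ∂(Measure.volumeIoiPow (n - 1)) =
      ENNReal.ofReal (F x * sphDet n F x / radTerm n F x ^ n / n) := by
    intro x
    have hx0 := ne_zero_of_mem_USphere x.2
    have hFx := hF.pos' hx0
    have hdet := hF.sphDet_pos x.2
    have hrad := hF.radTerm_pos x.2
    have hnorm : ‖gradMap n F x‖ = F x * radTerm n F x := by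
      rw [gradMap, norm_smul, hF.radTerm_eq x.2, Real.norm_of_nonneg hFx.le]
    have hpos : 0 < F x * radTerm n F x := mul_pos hFx hrad
    let a : Ioi (0 : ℝ) := ⟨(F x * radTerm n F x)⁻¹, inv_pos.2 hpos⟩
    have e : ∀ r : Ioi (0 : ℝ),
        ENNReal.ofReal |(gradMapDeriv n F ((r : ℝ) • (x : Euc n))).det| *
          (ball (0 : Euc n) 1).indicator 1 (gradMap n F ((r : ℝ) • (x : Euc n))) =
        ENNReal.ofReal (F x ^ (n + 1) * sphDet n F x) * (Iio a).indicator 1 r := by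
      intro r
      have hr : 0 < (r : ℝ) := r.2
      rw [hF.gradMapDeriv_smul hr hx0, hF.det_gradMapDeriv x.2, hF.gradMap_smul hr,
        abs_of_pos (by positivity)]
      congr 1
      have : (r : ℝ) • gradMap n F x ∈ ball (0 : Euc n) 1 ↔ r ∈ Iio a := by
        rw [mem_ball_zero_iff, norm_smul, hnorm, Real.norm_of_nonneg hr.le, mem_Iio,
          ← Subtype.coe_lt_coe, lt_inv_comm₀ hr hpos, ← one_div, lt_div_iff₀' hr]
      by_cases hra : r ∈ Iio a
      · rw [indicator_of_mem (this.2 hra), indicator_of_mem hra]; rfl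
      · rw [indicator_of_notMem (fun h => hra (this.1 h)), indicator_of_notMem hra]
    simp_rw [e]
    rw [lintegral_const_mul _ (measurable_one.indicator measurableSet_Iio),
      lintegral_indicator_one measurableSet_Iio, Measure.volumeIoiPow_apply_Iio,
      ← ENNReal.ofReal_mul (by positivity), hn1, Nat.sub_add_cancel (Nat.pos_of_ne_zero hn)]
    congr 1
    simp only [a]
    rw [inv_pow, mul_pow, pow_succ]
    field_simp
  rw [lintegral_congr hinner] at hcv
  have hInt : ∫ x : USphere n, F x * sphDet n F x / radTerm n F x ^ n / n ∂(sphMeasure n) =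
      (volume (ball (0 : Euc n) 1)).toReal := by
    rw [integral_eq_lintegral_of_nonneg_ae, ← hcv]
    · refine Eventually.of_forall fun x => ?_
      have hFx := hF.pos x x.2
      have hdet := hF.sphDet_pos x.2
      have hrad := hF.radTerm_pos x.2
      positivity
    · refine Continuous.aestronglyMeasurable ?_
      exact ((hF.continuous_coe.mul hF.continuous_sphDet).div (hF.continuous_radTerm.pow n)
        fun x => (pow_pos (hF.radTerm_pos x.2) n).ne').div_const _
  rw [integral_div] at hInt
  rw [sphArea, sphMeasure, Measure.toSphere_apply_univ, ENNReal.toReal_mul, ← hInt, sphInt,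
    sphMeasure]
  simp
  field_simp

end IsSupportFn

/-! ### Differentiation under the integral sign and Cauchy–Schwarz -/

/-- Differentiation under the integral sign over the sphere, one-sided at the left endpoint. -/
lemma hasDerivWithinAt_sphInt {n : ℕ} {K K' : ℝ → Euc n → ℝ} {T t : ℝ} (ht : t ∈ Ico 0 T)
    (hK : ∀ s ∈ Ico 0 T, ∀ x ∈ USphere n,
      HasDerivWithinAt (fun s => K s x) (K' s x) (Ico 0 T) s)
    (hKc : ∀ s ∈ Ico 0 T, Continuous fun x : USphere n => K s x)
    (hK' : ContinuousOn (fun p : ℝ × Euc n => K' p.1 p.2) (Ico 0 T ×ˢ USphere n)) :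
    HasDerivWithinAt (fun s => sphInt n (K s)) (sphInt n (K' t)) (Ico 0 T) t := by
  have : IsFiniteMeasure (sphMeasure n) := by unfold sphMeasure; infer_instance
  obtain ⟨b, htb, hbT⟩ := exists_between ht.2
  have hsub : Icc 0 b ⊆ Ico 0 T := fun s hs => ⟨hs.1, hs.2.trans_lt hbT⟩
  obtain ⟨C, hC⟩ := (isCompact_Icc.prod (isCompact_sphere (0 : Euc n) 1)).exists_bound_of_continuousOn
    (hK'.mono (prod_mono hsub subset_rfl))
  have hInt : ∀ s ∈ Ico 0 T, Integrable (fun x : USphere n => K s x) (sphMeasure n) :=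
    fun s hs => (hKc s hs).integrable_of_hasCompactSupport (HasCompactSupport.of_compactSpace _)
  rw [hasDerivWithinAt_iff_tendsto_slope]
  have hnhds : ∀ᶠ s in 𝓝[Ico 0 T \ {t}] t, s ∈ Icc 0 b := by
    filter_upwards [self_mem_nhdsWithin, mem_nhdsWithin_of_mem_nhds (Iio_mem_nhds htb)] with s hs hsb
    exact ⟨hs.1.1, le_of_lt hsb⟩
  have hslope : ∀ᶠ s in 𝓝[Ico 0 T \ {t}] t,
      ∫ x : USphere n, slope (fun s => K s x) t s ∂(sphMeasure n) =
        slope (fun s => sphInt n (K s)) t s := by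
    filter_upwards [hnhds] with s hs
    simp only [slope_def_field, sphInt]
    rw [integral_div, integral_sub (hInt s (hsub hs)) (hInt t ht)]
  refine Tendsto.congr' hslope ?_
  refine tendsto_integral_filter_of_dominated_convergence (fun _ => C) ?_ ?_
    (integrable_const C) ?_
  · filter_upwards [hnhds] with s hs
    simp only [slope_def_field]
    exact (((hKc s (hsub hs)).sub (hKc t ht)).div_const _).aestronglyMeasurable
  · filter_upwards [hnhds, self_mem_nhdsWithin] with s hs hs'
    refine Eventually.of_forall fun x => ?_
    have hst : 0 < |s - t| := abs_pos.2 (sub_ne_zero.2 hs'.2)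
    have h1 := (convex_Icc (0 : ℝ) b).norm_image_sub_le_of_norm_hasDerivWithin_le
      (f := fun s => K s x) (fun r hr => (hK r (hsub hr) x x.2).mono hsub)
      (fun r hr => hC (r, x) ⟨hr, x.2⟩) ⟨ht.1, htb.le⟩ hs
    rw [slope_def_field, norm_div, Real.norm_eq_abs (s - t), div_le_iff₀ hst]
    exact h1
  · exact Eventually.of_forall fun x => hasDerivWithinAt_iff_tendsto_slope.1 (hK t ht x x.2)

/-- The fundamental theorem of calculus for a tail integral; `g` may be singular at `0`. -/
lemma hasDerivAt_tailIntegral {g R : ℝ → ℝ} (hg : ContinuousOn g (Ioi 0))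
    (hR : ∀ s ∈ Ioi (0 : ℝ), IntegrableOn g (Ioi s) ∧ R s = ∫ t in Ioi s, g t)
    {s : ℝ} (hs : 0 < s) : HasDerivAt R (-g s) s := by
  have ha : 0 < s / 2 := by positivity
  have h1 : R =ᶠ[𝓝 s] fun r => R (s / 2) - ∫ t in (s / 2)..r, g t := by
    filter_upwards [lt_mem_nhds hs] with r hr
    rw [(hR _ ha).2, (hR r hr).2,
      ← intervalIntegral.integral_Ioi_sub_Ioi' (hR _ ha).1 (hR r hr).1]
    ring
  have hII : IntervalIntegrable g volume (s / 2) s :=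
    (hg.mono fun t ht => by
      rw [uIcc_of_le (by linarith)] at ht; exact ha.trans_le ht.1).intervalIntegrable
  have h2 := intervalIntegral.integral_hasDerivAt_right hII
    (hg.stronglyMeasurableAtFilter isOpen_Ioi s hs) (hg.continuousAt (Ioi_mem_nhds hs))
  exact (h2.const_sub _).congr_of_eventuallyEq h1

/-- Cauchy–Schwarz for continuous functions on the sphere, in discriminant form. -/
lemma sq_sphInt_le {n : ℕ} {a b c : Euc n → ℝ} (ha : Continuous fun x : USphere n => a x)
    (hb : Continuous fun x : USphere n => b x) (hc : Continuous fun x : USphere n => c x)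
    (hapos : ∀ x ∈ USphere n, 0 < a x) (hc2 : ∀ x ∈ USphere n, c x ^ 2 = a x * b x) :
    sphInt n c ^ 2 ≤ sphInt n a * sphInt n b := by
  have : IsFiniteMeasure (sphMeasure n) := by unfold sphMeasure; infer_instance
  have hInt : ∀ {g : USphere n → ℝ}, Continuous g → Integrable g (sphMeasure n) :=
    fun hg => hg.integrable_of_hasCompactSupport (HasCompactSupport.of_compactSpace _)
  have h : ∀ s : ℝ, 0 ≤ sphInt n a * (s * s) + (2 * sphInt n c) * s + sphInt n b := by
    intro s
    have e : sphInt n a * (s * s) + (2 * sphInt n c) * s + sphInt n b =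
        ∫ x : USphere n, (a x * (s * s) + (2 * c x) * s + b x) ∂(sphMeasure n) := by
      have i1 := (hInt ha).mul_const (s * s)
      have i2 := ((hInt hc).const_mul 2).mul_const s
      rw [integral_add (f := fun x : USphere n => a x * (s * s) + 2 * c x * s) (i1.add i2) (hInt hb),
        integral_add i1 i2, integral_mul_const, integral_mul_const, integral_const_mul]
      rfl
    rw [e]
    refine integral_nonneg fun x => ?_
    have hax := hapos x x.2
    have h1 : a x * (a x * (s * s) + (2 * c x) * s + b x) = (a x * s + c x) ^ 2 := by
      have := hc2 x x.2
      linear_combination -this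
    exact nonneg_of_mul_nonneg_right (h1 ▸ sq_nonneg _) hax
  have := discrim_le_zero h
  rw [discrim] at this
  linarith

/-! ### The derivative of the functional -/

/-- the derivative identity for `P` when `ℜ(s) = ∫ₛ^∞ dt/(t φ(t))`,
and nonpositivity of the right-hand side via the Hölder (Cauchy-Schwarz) inequality. -/
theorem Pprime_identity_decreasing_case
    (n : ℕ) (hn : 2 ≤ n)
    (f : Euc n → ℝ) (φ : ℝ → ℝ) (T : ℝ) (hT : 0 < T)
    (hf_smooth : ContDiffOn ℝ (⊤ : ℕ∞) f {(0 : Euc n)}ᶜ)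
    (hf_pos : ∀ x ∈ USphere n, 0 < f x)
    (hφ_smooth : ContDiffOn ℝ (⊤ : ℕ∞) φ (Ioi 0))
    (hφ_pos : ∀ s ∈ Ioi (0 : ℝ), 0 < φ s)
    (R : ℝ → ℝ)
    (hR : ∀ s ∈ Ioi (0 : ℝ), IntegrableOn (fun t => 1 / (t * φ t)) (Ioi s) ∧
      R s = ∫ t in Ioi s, 1 / (t * φ t))
    (H : ℝ → Euc n → ℝ) (hH : IsFlowSol n f φ (Ico 0 T) H) :
    ∀ t ∈ Ico (0 : ℝ) T, ∃ d : ℝ,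
      HasDerivWithinAt (fun s => sphInt n (fun x => R (1 / H s x) * f x)) d (Ico 0 T) t ∧
      d * sphInt n (fun x => f x / φ (1 / H t x)) =
        (sphInt n (fun x => f x / φ (1 / H t x))) ^ 2 -
          sphInt n (fun x => f x ^ 2 * radTerm n (H t) x ^ n /
            (H t x * φ (1 / H t x) ^ 2 * sphDet n (H t) x)) *
          sphInt n (fun x => H t x * sphDet n (H t) x / radTerm n (H t) x ^ n) ∧
      (sphInt n (fun x => f x / φ (1 / H t x))) ^ 2 -
          sphInt n (fun x => f x ^ 2 * radTerm n (H t) x ^ n /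
            (H t x * φ (1 / H t x) ^ 2 * sphDet n (H t) x)) *
          sphInt n (fun x => H t x * sphDet n (H t) x / radTerm n (H t) x ^ n) ≤ 0 := by
  have hn0 : n ≠ 0 := by omega
  have : Nontrivial (Euc n) := by
    have : Nontrivial (Fin n) := Fin.nontrivial_iff_two_le.2 hn
    infer_instance
  have : IsFiniteMeasure (sphMeasure n) := by unfold sphMeasure; infer_instance
  have : (sphMeasure n).IsOpenPosMeasure := by unfold sphMeasure; infer_instance
  have hInt : ∀ {g : USphere n → ℝ}, Continuous g → Integrable g (sphMeasure n) :=
    fun hg => hg.integrable_of_hasCompactSupport (HasCompactSupport.of_compactSpace _)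
  have hJ : UniqueDiffOn ℝ (Ico 0 T) := uniqueDiffOn_Ico 0 T
  have hD : UniqueDiffOn ℝ (Ico 0 T ×ˢ ({(0 : Euc n)}ᶜ : Set (Euc n))) :=
    hJ.prod isOpen_compl_singleton.uniqueDiffOn
  have hφc : ContinuousOn φ (Ioi 0) := hφ_smooth.continuousOn
  have hfc : Continuous fun x : USphere n => f x :=
    continuous_sphere_of_continuousOn hf_smooth.continuousOn
  have hg : ContinuousOn (fun t => 1 / (t * φ t)) (Ioi (0 : ℝ)) :=
    continuousOn_const.div (continuousOn_id.mul hφc) fun t ht =>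
      (mul_pos ht (hφ_pos t ht)).ne'
  have hRd : ∀ s : ℝ, 0 < s → HasDerivAt R (-(1 / (s * φ s))) s :=
    fun s hs => hasDerivAt_tailIntegral hg hR hs
  have hpos : ∀ s ∈ Ico 0 T, ∀ x ∈ USphere n, 0 < H s x := fun s hs x hx =>
    (hH.body s hs).pos x hx
  have hφpos : ∀ s ∈ Ico 0 T, ∀ x ∈ USphere n, 0 < φ (1 / H s x) := fun s hs x hx =>
    hφ_pos _ (one_div_pos.2 (hpos s hs x hx))
  -- The time derivative of `H`, in a form in which its joint continuity is evident.
  let Ht : ℝ → Euc n → ℝ := fun s x =>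
    fderivWithin ℝ (fun p : ℝ × Euc n => H p.1 p.2) (Ico 0 T ×ˢ ({(0 : Euc n)}ᶜ : Set (Euc n)))
      (s, x) (1, 0)
  have hHt : ∀ s ∈ Ico 0 T, ∀ x ∈ USphere n,
      HasDerivWithinAt (fun s => H s x) (Ht s x) (Ico 0 T) s := by
    intro s hs x hx
    have hx0 := ne_zero_of_mem_USphere hx
    have h1 := (hH.smooth.differentiableOn (by simp) (s, x) ⟨hs, hx0⟩).hasFDerivWithinAt
    have h2 : HasDerivWithinAt (fun r : ℝ => (r, x)) ((1 : ℝ), (0 : Euc n)) (Ico 0 T) s :=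
      (hasDerivWithinAt_id s _).prodMk (hasDerivWithinAt_const s _ x)
    have hmaps : MapsTo (fun r : ℝ => (r, x)) (Ico 0 T)
        (Ico 0 T ×ˢ ({(0 : Euc n)}ᶜ : Set (Euc n))) := fun r hr => ⟨hr, hx0⟩
    exact h1.comp_hasDerivWithinAt s h2 hmaps
  have hHtc : ContinuousOn (fun p : ℝ × Euc n => Ht p.1 p.2) (Ico 0 T ×ˢ USphere n) := by
    have h1 := (hH.smooth.continuousOn_fderivWithin hD (by simp)).mono
      (prod_mono (subset_refl (Ico 0 T)) fun x (hx : x ∈ USphere n) => ne_zero_of_mem_USphere hx)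
    exact h1.clm_apply continuousOn_const
  -- The time derivative of the integrand `ℜ(1/h) f`.
  let K' : ℝ → Euc n → ℝ := fun s x => f x / (H s x * φ (1 / H s x)) * Ht s x
  have hK : ∀ s ∈ Ico 0 T, ∀ x ∈ USphere n,
      HasDerivWithinAt (fun s => R (1 / H s x) * f x) (K' s x) (Ico 0 T) s := by
    intro s hs x hx
    have hp := hpos s hs x hx
    have hp' := hφpos s hs x hx
    have h1 : HasDerivWithinAt (fun s => 1 / H s x) (-Ht s x / H s x ^ 2) (Ico 0 T) s := by
      simp only [one_div]
      exact (hHt s hs x hx).inv hp.ne'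
    have h2 := ((hRd _ (one_div_pos.2 hp)).comp_hasDerivWithinAt s h1).mul_const (f x)
    have e : K' s x = -(1 / (1 / H s x * φ (1 / H s x))) * (-Ht s x / H s x ^ 2) * f x := by
      simp only [K']
      field_simp
    rw [e]
    exact h2
  have hHjc : ContinuousOn (fun p : ℝ × Euc n => H p.1 p.2) (Ico 0 T ×ˢ USphere n) :=
    hH.smooth.continuousOn.mono
      (prod_mono (subset_refl (Ico 0 T)) fun x (hx : x ∈ USphere n) => ne_zero_of_mem_USphere hx)
  have hφjc : ContinuousOn (fun p : ℝ × Euc n => φ (1 / H p.1 p.2)) (Ico 0 T ×ˢ USphere n) :=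
    hφc.comp (continuousOn_const.div hHjc fun p hp => (hpos p.1 hp.1 p.2 hp.2).ne')
      fun p hp => one_div_pos.2 (hpos p.1 hp.1 p.2 hp.2)
  have hK'c : ContinuousOn (fun p : ℝ × Euc n => K' p.1 p.2) (Ico 0 T ×ˢ USphere n) := by
    have hfj : ContinuousOn (fun p : ℝ × Euc n => f p.2) (Ico 0 T ×ˢ USphere n) :=
      hf_smooth.continuousOn.comp continuousOn_snd fun p hp => ne_zero_of_mem_USphere hp.2
    exact (hfj.div (hHjc.mul hφjc) fun p hp =>
      (mul_pos (hpos p.1 hp.1 p.2 hp.2) (hφpos p.1 hp.1 p.2 hp.2)).ne').mul hHtc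
  have hKc : ∀ s ∈ Ico 0 T, Continuous fun x : USphere n => R (1 / H s x) * f x := by
    intro s hs
    have h1 : ContinuousOn R (Ioi 0) := fun r hr => (hRd r hr).continuousAt.continuousWithinAt
    refine (h1.comp_continuous (f := fun x : USphere n => 1 / H s x) ?_ fun x => ?_).mul hfc
    · exact continuous_const.div (hH.body s hs).continuous_coe fun x => (hpos s hs x x.2).ne'
    · exact one_div_pos.2 (hpos s hs x x.2)
  intro t ht
  have hB := hH.body t ht
  have hhc := hB.continuous_coe
  have hrc := hB.continuous_radTerm
  have hdc := hB.continuous_sphDet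
  have hφtc : Continuous fun x : USphere n => φ (1 / H t x) :=
    hφc.comp_continuous (f := fun x : USphere n => 1 / H t x)
      (continuous_const.div hhc fun x => (hpos t ht x x.2).ne')
      fun x => one_div_pos.2 (hpos t ht x x.2)
  have hAc : Continuous fun x : USphere n => f x / φ (1 / H t x) :=
    hfc.div hφtc fun x => (hφpos t ht x x.2).ne'
  have hBc : Continuous fun x : USphere n => f x ^ 2 * radTerm n (H t) x ^ n /
      (H t x * φ (1 / H t x) ^ 2 * sphDet n (H t) x) :=
    ((hfc.pow 2).mul (hrc.pow n)).div ((hhc.mul (hφtc.pow 2)).mul hdc) fun x =>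
      (mul_pos (mul_pos (hpos t ht x x.2) (pow_pos (hφpos t ht x x.2) 2))
        (hB.sphDet_pos x.2)).ne'
  have hCc : Continuous fun x : USphere n => H t x * sphDet n (H t) x / radTerm n (H t) x ^ n :=
    (hhc.mul hdc).div (hrc.pow n) fun x => (pow_pos (hB.radTerm_pos x.2) n).ne'
  have hApos : 0 < sphInt n (fun x => f x / φ (1 / H t x)) := by
    obtain ⟨x₀, hx₀⟩ : (USphere n).Nonempty := NormedSpace.sphere_nonempty.2 zero_le_one
    have hnn : ∀ x : USphere n, 0 < f x / φ (1 / H t x) := fun x =>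
      div_pos (hf_pos x x.2) (hφpos t ht x x.2)
    exact hAc.integral_pos_of_hasCompactSupport_nonneg_nonzero
      (HasCompactSupport.of_compactSpace _) (fun x => (hnn x).le) (x := ⟨x₀, hx₀⟩) (hnn _).ne'
  have hd : sphInt n (K' t) = sphInt n (fun x => f x / φ (1 / H t x)) -
      flowEta n f φ (H t) * sphInt n (fun x => f x ^ 2 * radTerm n (H t) x ^ n /
        (H t x * φ (1 / H t x) ^ 2 * sphDet n (H t) x)) := by
    have hsub := integral_sub (hInt hAc) ((hInt hBc).const_mul (flowEta n f φ (H t)))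
    rw [integral_const_mul] at hsub
    refine Eq.trans ?_ hsub
    refine integral_congr_ae (Eventually.of_forall fun x => ?_)
    have hp := hpos t ht x x.2
    have hp' := hφpos t ht x x.2
    have hdet := hB.sphDet_pos x.2
    -- Derivatives within `Ico 0 T` are unique, so the flow equation computes `Ht t x`.
    have he := (hJ t ht).eq_deriv _ (hHt t ht x x.2) (hH.eqn t ht x x.2)
    simp only [K', he]
    field_simp
  refine ⟨sphInt n (K' t), hasDerivWithinAt_sphInt ht hK hKc hK'c, ?_, ?_⟩
  · rw [hd, hB.sphInt_eq_sphArea hn0, flowEta]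
    field_simp
  · have hCS := sq_sphInt_le (a := fun x => f x ^ 2 * radTerm n (H t) x ^ n /
      (H t x * φ (1 / H t x) ^ 2 * sphDet n (H t) x))
      (b := fun x => H t x * sphDet n (H t) x / radTerm n (H t) x ^ n)
      (c := fun x => f x / φ (1 / H t x))
      hBc hCc hAc (fun x hx => by
        have hp := hpos t ht x hx
        have hp' := hφpos t ht x hx
        have hdet := hB.sphDet_pos hx
        have hr := hB.radTerm_pos hx
        have hfx := hf_pos x hx
        positivity) (fun x hx => by
        have hp := hpos t ht x hx
        have hp' := hφpos t ht x hx
        have hdet := hB.sphDet_pos hx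
        have hr := hB.radTerm_pos hx
        field_simp)
    linarith
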